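/- Let n ≥ 6 and 1 ≤ k ≤ n. For every primitive non-powerful signed digraph S of order n, L(S,k) ≤ (2n-k)(n-1) + 1. Moreover, for any integer t with (2n-k)(n-1) - 3 < t < (2n-k)(n-1), there is no primitive non-powerful signed digraph S of order n with L(S,k) = t (a 'gap' in the kth upper base set). -/

import Mathlib

/-- There is a walk of length `l` from `u` to `v` in the digraph with arc relation `A`. -/
def HasWalk {n : ℕ} (A : Fin n → Fin n → Prop) (u v : Fin n) (l : ℕ) : Prop :=
  ∃ f : ℕ → Fin n, f 0 = u ∧ f l = v ∧ ∀ i < l, A (f i) (f (i + 1))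

/-- A digraph is primitive if for some `p > 0` every ordered pair of vertices is
joined by a walk of length exactly `p`. -/
def Primitive {n : ℕ} (A : Fin n → Fin n → Prop) : Prop :=
  ∃ p, 0 < p ∧ ∀ u v : Fin n, HasWalk A u v p

/-- `f` is the vertex sequence of a walk of length `l` from `u` to `v` in `A`. -/
def IsWalkSeq {n : ℕ} (A : Fin n → Fin n → Prop) (f : ℕ → Fin n) (u v : Fin n) (l : ℕ) : Prop :=
  f 0 = u ∧ f l = v ∧ ∀ i < l, A (f i) (f (i + 1))

/-- The sign of (the length-`l` initial part of) the walk with vertex sequence `f`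
in the signed digraph `S`. -/
def walkSign {n : ℕ} (S : Fin n → Fin n → ℤ) (f : ℕ → Fin n) (l : ℕ) : ℤ :=
  ∏ i ∈ Finset.range l, S (f i) (f (i + 1))

/-- The underlying digraph of a signed digraph `S`. -/
def Underlying {n : ℕ} (S : Fin n → Fin n → ℤ) : Fin n → Fin n → Prop :=
  fun u v => S u v ≠ 0

/-- All entries of `S` are in `{0, 1, -1}`: `S` is a sign pattern / signed digraph. -/
def SignPattern {n : ℕ} (S : Fin n → Fin n → ℤ) : Prop :=
  ∀ u v, S u v = 0 ∨ S u v = 1 ∨ S u v = -1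

/-- There is a pair of SSSD walks of length `l` from `u` to `v`: two walks with the
same endpoints and length but different signs. -/
def HasSSSD {n : ℕ} (S : Fin n → Fin n → ℤ) (u v : Fin n) (l : ℕ) : Prop :=
  ∃ f g : ℕ → Fin n, IsWalkSeq (Underlying S) f u v l ∧ IsWalkSeq (Underlying S) g u v l ∧
    walkSign S f l ≠ walkSign S g l

/-- A signed digraph is non-powerful iff it contains a pair of SSSD walks. -/
def NonPowerful {n : ℕ} (S : Fin n → Fin n → ℤ) : Prop :=
  ∃ u v l, HasSSSD S u v l

/-- `exp_D(X)`: the least `p` such that every vertex is reachable from some vertex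
of `X` by a walk of length exactly `p`. -/
noncomputable def setExp {n : ℕ} (A : Fin n → Fin n → Prop) (X : Finset (Fin n)) : ℕ :=
  sInf {p | ∀ v, ∃ x ∈ X, HasWalk A x v p}

/-- `F(D,k)`: the `k`th upper multiexponent. -/
noncomputable def upperMultiexp {n : ℕ} (A : Fin n → Fin n → Prop) (k : ℕ) : ℕ :=
  sSup {e | ∃ X : Finset (Fin n), X.card = k ∧ setExp A X = e}

/-- `l_S(X)`: the least `p` such that every vertex admits a pair of SSSD walks of
length `p` from some vertex of `X`. -/
noncomputable def setBase {n : ℕ} (S : Fin n → Fin n → ℤ) (X : Finset (Fin n)) : ℕ :=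
  sInf {p | ∀ v, ∃ x ∈ X, HasSSSD S x v p}

/-- `L(S,k)`: the `k`th upper base. -/
noncomputable def upperBase {n : ℕ} (S : Fin n → Fin n → ℤ) (k : ℕ) : ℕ :=
  sSup {e | ∃ X : Finset (Fin n), X.card = k ∧ setBase S X = e}

/-- Distance from `u` to `v` in the digraph `A`. -/
noncomputable def ddist {n : ℕ} (A : Fin n → Fin n → Prop) (u v : Fin n) : ℕ :=
  sInf {l | HasWalk A u v l}

/-- Diameter of the digraph `A`. -/
noncomputable def diam {n : ℕ} (A : Fin n → Fin n → Prop) : ℕ :=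
  sSup {d | ∃ u v : Fin n, ddist A u v = d}

/-- `f` is the vertex sequence of a cycle of length `p` in `A`: a closed walk of
length `p` whose first `p` vertices are pairwise distinct. -/
def IsCycleSeq {n : ℕ} (A : Fin n → Fin n → Prop) (f : ℕ → Fin n) (p : ℕ) : Prop :=
  0 < p ∧ f p = f 0 ∧ (∀ i < p, A (f i) (f (i + 1))) ∧
    ∀ i < p, ∀ j < p, f i = f j → i = j

/-- The digraph `D₁` on `{1,…,n}` (vertex `i` is index `i-1`): the Hamiltonian cycle
`1→2→⋯→n→1` together with the extra arc `(n-1)→1`. -/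
def D1 (n : ℕ) : Fin n → Fin n → Prop := fun u v =>
  (v.val = u.val + 1) ∨ (u.val = n - 1 ∧ v.val = 0) ∨ (u.val = n - 2 ∧ v.val = 0)

/-- The digraph `D₂`: `D₁` together with the extra arc `(n)→2`. -/
def D2 (n : ℕ) : Fin n → Fin n → Prop := fun u v =>
  D1 n u v ∨ (u.val = n - 1 ∧ v.val = 1)

/-- Isomorphism of digraphs on the same vertex set `Fin n`. -/
def DigraphIso {n : ℕ} (A B : Fin n → Fin n → Prop) : Prop :=
  ∃ e : Fin n ≃ Fin n, ∀ u v, A u v ↔ B (e u) (e v)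

section Helpers

/-- Signed walks: a walk from `u` to `v` of length `l` and sign `ε`. -/
inductive SW {n : ℕ} (S : Fin n → Fin n → ℤ) : Fin n → Fin n → ℕ → ℤ → Prop
  | nil (u : Fin n) : SW S u u 0 1
  | cons {u v w : Fin n} {l : ℕ} {ε : ℤ} : S u v ≠ 0 → SW S v w l ε →
      SW S u w (l + 1) (S u v * ε)

variable {n : ℕ} {S : Fin n → Fin n → ℤ}

lemma SW.append {u v w : Fin n} {l l' : ℕ} {ε ε' : ℤ} (h : SW S u v l ε) (h' : SW S v w l' ε') :
    SW S u w (l + l') (ε * ε') := by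
  induction h with
  | nil u => simpa using h'
  | cons a _ ih =>
    have := SW.cons a (ih h')
    rw [Nat.add_right_comm, mul_assoc]
    exact this

lemma SW.single {u v : Fin n} (h : S u v ≠ 0) : SW S u v 1 (S u v) := by
  simpa using SW.cons h (SW.nil v)

lemma SW.cast {u v : Fin n} {l l' : ℕ} {ε ε' : ℤ} (h : SW S u v l ε) (hl : l = l') (he : ε = ε') :
    SW S u v l' ε' := by subst hl; subst he; exact h

lemma sw_seg (f : ℕ → Fin n) (i d : ℕ) (h : ∀ m < d, S (f (i + m)) (f (i + m + 1)) ≠ 0) :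
    SW S (f i) (f (i + d)) d (∏ m ∈ Finset.range d, S (f (i + m)) (f (i + m + 1))) := by
  induction d with
  | zero => simpa using SW.nil (f i)
  | succ d ih =>
    rw [Finset.prod_range_succ]
    exact (ih (fun m hm => h m (by omega))).append (SW.single (h d (by omega)))

lemma SW.of_seq {f : ℕ → Fin n} {u v : Fin n} {l : ℕ} (h : IsWalkSeq (Underlying S) f u v l) :
    SW S u v l (walkSign S f l) := by
  obtain ⟨h0, h1, h2⟩ := h
  have := sw_seg (S := S) f 0 l (fun m hm => by simpa [Underlying] using h2 m hm)
  simpa [h0, h1, walkSign] using this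

lemma SW.to_seq {u v : Fin n} {l : ℕ} {ε : ℤ} (h : SW S u v l ε) :
    ∃ f : ℕ → Fin n, IsWalkSeq (Underlying S) f u v l ∧ walkSign S f l = ε := by
  induction h with
  | nil u => exact ⟨fun _ => u, ⟨rfl, rfl, by simp⟩, by simp [walkSign]⟩
  | @cons u v w l ε a _ ih =>
    obtain ⟨f, ⟨h0, h1, h2⟩, h3⟩ := ih
    refine ⟨fun i => Nat.casesOn i u f, ⟨rfl, h1, ?_⟩, ?_⟩
    · intro i hi
      cases i with
      | zero => simpa [Underlying, h0] using a
      | succ i => exact h2 i (by omega)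
    · simp only [walkSign] at h3 ⊢
      rw [Finset.prod_range_succ', mul_comm]
      simp [h0, h3]

lemma hasSSSD_iff {u v : Fin n} {l : ℕ} :
    HasSSSD S u v l ↔ ∃ ε ε', SW S u v l ε ∧ SW S u v l ε' ∧ ε ≠ ε' := by
  constructor
  · rintro ⟨f, g, hf, hg, hne⟩
    exact ⟨_, _, SW.of_seq hf, SW.of_seq hg, hne⟩
  · rintro ⟨ε, ε', h1, h2, hne⟩
    obtain ⟨f, hf, rfl⟩ := h1.to_seq
    obtain ⟨g, hg, rfl⟩ := h2.to_seq
    exact ⟨f, g, hf, hg, hne⟩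

lemma hasWalk_iff {u v : Fin n} {l : ℕ} :
    HasWalk (Underlying S) u v l ↔ ∃ ε, SW S u v l ε := by
  constructor
  · rintro ⟨f, hf⟩
    exact ⟨_, SW.of_seq hf⟩
  · rintro ⟨ε, h⟩
    obtain ⟨f, hf, -⟩ := h.to_seq
    exact ⟨f, hf⟩

lemma SW.ne_zero {u v : Fin n} {l : ℕ} {ε : ℤ} (h : SW S u v l ε) : ε ≠ 0 := by
  induction h with
  | nil u => simp
  | cons a _ ih => exact mul_ne_zero a ih

lemma SW.sign (hS : SignPattern S) {u v : Fin n} {l : ℕ} {ε : ℤ} (h : SW S u v l ε) :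
    ε = 1 ∨ ε = -1 := by
  induction h with
  | nil u => simp
  | @cons u v w l ε a _ ih =>
    rcases hS u v with h | h | h <;> rcases ih with h' | h' <;> simp_all

lemma SSSD.pre {u v w : Fin n} {l m : ℕ} {ε : ℤ} (h : SW S u v l ε) (h' : HasSSSD S v w m) :
    HasSSSD S u w (l + m) := by
  rw [hasSSSD_iff] at h' ⊢
  obtain ⟨a, b, ha, hb, hab⟩ := h'
  exact ⟨_, _, h.append ha, h.append hb, fun e => hab (mul_left_cancel₀ h.ne_zero e)⟩

lemma SSSD.post {u v w : Fin n} {l m : ℕ} {ε : ℤ} (h' : HasSSSD S u v m) (h : SW S v w l ε) :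
    HasSSSD S u w (m + l) := by
  rw [hasSSSD_iff] at h' ⊢
  obtain ⟨a, b, ha, hb, hab⟩ := h'
  exact ⟨_, _, ha.append h, hb.append h, fun e => hab (mul_right_cancel₀ h.ne_zero e)⟩

lemma SW.pow {u : Fin n} {l : ℕ} {ε : ℤ} (h : SW S u u l ε) (a : ℕ) :
    SW S u u (a * l) (ε ^ a) := by
  induction a with
  | zero => simpa using SW.nil u
  | succ a ih =>
    rw [Nat.succ_mul, pow_succ]
    exact ih.append h

/-- `V` is the vertex set of a cycle of length `p` and sign `ε`. -/
structure Cyc (S : Fin n → Fin n → ℤ) (V : Finset (Fin n)) (p : ℕ) (ε : ℤ) : Prop where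
  pos : 0 < p
  card : V.card = p
  cl : ∀ u ∈ V, SW S u u p ε
  pred : ∀ u ∈ V, ∃ u' ∈ V, S u' u ≠ 0
  seq : ∃ f : ℕ → Fin n, (∀ i, S (f i) (f (i + 1)) ≠ 0) ∧ (∀ i, f (i + p) = f i) ∧
    V = (Finset.range p).image f

lemma cyc_of_seq (f : ℕ → Fin n) (p : ℕ) (hp : 0 < p) (h0 : f p = f 0)
    (ha : ∀ i < p, S (f i) (f (i + 1)) ≠ 0) (hi : ∀ i < p, ∀ j < p, f i = f j → i = j) :
    Cyc S ((Finset.range p).image f) p (∏ m ∈ Finset.range p, S (f m) (f (m + 1))) := by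
  refine ⟨hp, ?_, ?_, ?_, ?_⟩
  · rw [Finset.card_image_of_injOn, Finset.card_range]
    intro a ha b hb hab
    simp only [Finset.coe_range, Set.mem_Iio] at ha hb
    exact hi a ha b hb hab
  · intro u hu
    simp only [Finset.mem_image, Finset.mem_range] at hu
    obtain ⟨i, hip, rfl⟩ := hu
    have h1 := sw_seg (S := S) f 0 i (fun m hm => by simpa using ha m (by omega))
    have h2 := sw_seg (S := S) f i (p - i) (fun m hm => ha (i + m) (by omega))
    simp only [Nat.zero_add] at h1
    rw [show i + (p - i) = p by omega, h0] at h2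
    refine (h2.append h1).cast (by omega) ?_
    rw [mul_comm]
    have := Finset.prod_range_add (fun m => S (f m) (f (m + 1))) i (p - i)
    rw [show i + (p - i) = p by omega] at this
    rw [this]
  · intro u hu
    simp only [Finset.mem_image, Finset.mem_range] at hu
    obtain ⟨i, hip, rfl⟩ := hu
    rcases Nat.eq_zero_or_pos i with rfl | h
    · refine ⟨f (p - 1), Finset.mem_image_of_mem _ (by simp; omega), ?_⟩
      have := ha (p - 1) (by omega)
      rwa [show p - 1 + 1 = p by omega, h0] at this
    · refine ⟨f (i - 1), Finset.mem_image_of_mem _ (by simp; omega), ?_⟩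
      have := ha (i - 1) (by omega)
      rwa [show i - 1 + 1 = i by omega] at this
  · refine ⟨fun i => f (i % p), ?_, ?_, ?_⟩
    · intro i
      have h1 := Nat.mod_lt i hp
      have h2 := ha (i % p) h1
      simp only
      rcases Nat.lt_or_ge (i % p + 1) p with h | h
      · rwa [show (i + 1) % p = i % p + 1 by
          rw [Nat.add_mod_eq_ite, Nat.mod_eq_of_lt (by omega : 1 < p), if_neg (by omega)]]
      · have h3 : i % p + 1 = p := by omega
        rw [h3, h0] at h2
        have : (i + 1) % p = 0 := by
          rw [← Nat.mod_add_mod, h3, Nat.mod_self]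
        rwa [this]
    · intro i; simp
    · apply Finset.image_congr
      intro i hi
      simp only [Finset.coe_range, Set.mem_Iio] at hi
      simp [Nat.mod_eq_of_lt hi]

lemma closed_ind (P : ℕ → ℤ → Prop) (h01 : P 0 1)
    (hmul : ∀ l ε l' ε', P l ε → P l' ε' → P (l + l') (ε * ε'))
    (hc : ∀ V p ε, Cyc S V p ε → P p ε) :
    ∀ l u ε, SW S u u l ε → P l ε := by
  intro l
  induction l using Nat.strong_induction_on with
  | _ l ih =>
    intro u ε h
    obtain ⟨f, ⟨h0, h1, h2⟩, h3⟩ := h.to_seq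
    rcases Nat.eq_zero_or_pos l with rfl | hl
    · simp [walkSign] at h3; rwa [← h3]
    by_cases hi : ∀ i < l, ∀ j < l, f i = f j → i = j
    · have := hc _ _ _ (cyc_of_seq (S := S) f l hl (by rw [h0, h1]) h2 hi)
      rw [← h3]; exact this
    · have : ∃ i j, i < j ∧ j < l ∧ f i = f j := by
        push Not at hi
        obtain ⟨i, hi, j, hj, e, ne⟩ := hi
        rcases Nat.lt_or_gt_of_ne ne with h | h
        · exact ⟨i, j, h, hj, e⟩
        · exact ⟨j, i, h, hi, e.symm⟩
      obtain ⟨i, j, hij, hj, e⟩ := this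
      have s1 := sw_seg (S := S) f 0 i (fun m hm => by simpa [Underlying] using h2 m (by omega))
      have s2 := sw_seg (S := S) f i (j - i) (fun m hm => h2 (i + m) (by omega))
      have s3 := sw_seg (S := S) f j (l - j) (fun m hm => h2 (j + m) (by omega))
      have q1 := Finset.prod_range_add (fun m => S (f m) (f (m + 1))) i (j - i)
      have q2 := Finset.prod_range_add (fun m => S (f m) (f (m + 1))) j (l - j)
      simp only [Nat.zero_add] at s1
      rw [show i + (j - i) = j by omega] at s2 q1
      rw [show j + (l - j) = l by omega] at s3 q2
      rw [← e] at s2 s3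
      rw [h1] at s3
      rw [h0] at s1
      have a1 := ih (j - i) (by omega) _ _ s2
      have a2 := ih (i + (l - j)) (by omega) _ _ (s1.append s3)
      have a3 := hmul _ _ _ _ a1 a2
      rw [show j - i + (i + (l - j)) = l by omega] at a3
      convert a3 using 1
      rw [← h3, walkSign, q2, q1]
      ring

/-- arc out of a proper nonempty set -/
lemma exists_exit (R : Fin n → Fin n → Prop) (hR : ∀ u v, Relation.ReflTransGen R u v)
    (T : Finset (Fin n)) (hT : T.Nonempty) (hU : T ≠ Finset.univ) : ∃ a ∈ T, ∃ b, b ∉ T ∧ R a b := by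
  obtain ⟨a, ha⟩ := hT
  obtain ⟨b, hb⟩ : ∃ b, b ∉ T := by
    by_contra h; push Not at h; exact hU (Finset.eq_univ_of_forall h)
  by_contra h
  push Not at h
  have : ∀ c, Relation.ReflTransGen R a c → c ∈ T := by
    intro c hc
    induction hc with
    | refl => exact ha
    | @tail x y _ hxy ih =>
      by_contra hy
      exact h x ih y hy hxy
  exact hb (this b (hR a b))

lemma grow (T : ℕ → Finset (Fin n)) (hmono : ∀ i, T i ⊆ T (i + 1))
    (hs : ∀ i, T i ≠ Finset.univ → T i ≠ T (i + 1)) (i : ℕ) :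
    min n ((T 0).card + i) ≤ (T i).card := by
  induction i with
  | zero => simp
  | succ i ih =>
    by_cases h : T i = Finset.univ
    · have : (T (i + 1)) = Finset.univ := by
        apply Finset.eq_univ_of_forall; intro x
        apply hmono; rw [h]; exact Finset.mem_univ x
      rw [this]; simp
    · have := Finset.card_lt_card (Finset.ssubset_iff_subset_ne.2 ⟨hmono i, hs i h⟩)
      omega

lemma prim_walk (hP : Primitive (Underlying S)) :
    ∃ p, 0 < p ∧ ∀ q ≥ p, ∀ u v, ∃ ε, SW S u v q ε := by
  obtain ⟨p, hp, h⟩ := hP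
  refine ⟨p, hp, ?_⟩
  intro q hq
  induction q, hq using Nat.le_induction with
  | base => intro u v; exact hasWalk_iff.1 (h u v)
  | succ q hq ih =>
    intro u v
    obtain ⟨ε, hw⟩ := hasWalk_iff.1 (h u v)
    cases hw with
    | nil => omega
    | @cons _ w _ l e a hw =>
      obtain ⟨e', h'⟩ := ih w v
      exact ⟨_, SW.cons a h'⟩

lemma sw_rtg {u v : Fin n} {l : ℕ} {ε : ℤ} (h : SW S u v l ε) :
    Relation.ReflTransGen (fun a b => S a b ≠ 0) u v := by
  induction h with
  | nil => exact .refl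
  | cons a _ ih => exact .head a ih

lemma prim_rtg (hP : Primitive (Underlying S)) (u v : Fin n) :
    Relation.ReflTransGen (fun a b => S a b ≠ 0) u v := by
  obtain ⟨p, hp, h⟩ := prim_walk hP
  obtain ⟨ε, hw⟩ := h p le_rfl u v
  exact sw_rtg hw

lemma prim_pred (hP : Primitive (Underlying S)) (v : Fin n) : ∃ u, S u v ≠ 0 := by
  obtain ⟨p, hp, h⟩ := hP
  obtain ⟨f, h0, h1, h2⟩ := h v v
  have := h2 (p - 1) (by omega)
  rw [show p - 1 + 1 = p by omega, h1] at this
  exact ⟨_, this⟩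

lemma prim_rtg_pow (hP : Primitive (Underlying S)) (s : ℕ) (hs : 0 < s) (u v : Fin n) :
    Relation.ReflTransGen (fun a b => ∃ ε, SW S b a s ε) u v := by
  have key : ∀ m a b ε, SW S b a (m * s) ε →
      Relation.ReflTransGen (fun a b => ∃ ε, SW S b a s ε) a b := by
    intro m
    induction m with
    | zero =>
      intro a b ε h
      rw [Nat.zero_mul] at h
      cases h; exact .refl
    | succ m ih =>
      intro a b ε h
      obtain ⟨f, ⟨h0, h1, h2⟩, h3⟩ := h.to_seq
      rw [Nat.succ_mul] at h1 h2
      have s1 := sw_seg (S := S) f 0 (m * s) (fun i hi => by simpa [Underlying] using h2 i (by omega))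
      have s2 := sw_seg (S := S) f (m * s) s (fun i hi => h2 (m * s + i) (by omega))
      rw [h0, Nat.zero_add] at s1
      rw [h1] at s2
      exact .head ⟨_, s2⟩ (ih _ _ _ s1)
  obtain ⟨p, hp, h⟩ := prim_walk hP
  obtain ⟨ε, hw⟩ := h (p * s) (Nat.le_mul_of_pos_right p hs) v u
  exact key p u v ε hw

open Classical in
/-- exact-length walks from a cycle to any vertex -/
lemma cyc_reach (hP : Primitive (Underlying S)) {V : Finset (Fin n)} {p : ℕ} {ε : ℤ}
    (hC : Cyc S V p ε) (d : ℕ) (hd : n ≤ p + d) (v : Fin n) : ∃ u ∈ V, ∃ e, SW S u v d e := by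
  let T : ℕ → Finset (Fin n) := fun i => Finset.univ.filter (fun v => ∃ u ∈ V, ∃ e, SW S u v i e)
  have hT0 : V ⊆ T 0 := fun u hu => by
    simp only [T, Finset.mem_filter, Finset.mem_univ, true_and]
    exact ⟨u, hu, 1, SW.nil u⟩
  have hmono : ∀ i, T i ⊆ T (i + 1) := by
    intro i v hv
    simp only [T, Finset.mem_filter, Finset.mem_univ, true_and] at hv ⊢
    obtain ⟨u, hu, e, h⟩ := hv
    obtain ⟨u', hu', a⟩ := hC.pred u hu
    exact ⟨u', hu', _, SW.cons a h⟩
  have hsub : ∀ i, V ⊆ T i := by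
    intro i
    induction i with
    | zero => exact hT0
    | succ i ih => exact ih.trans (hmono i)
  have hVn : V.Nonempty := by rw [← Finset.card_pos, hC.card]; exact hC.pos
  have := grow T hmono (by
    intro i hi he
    obtain ⟨a, ha, b, hb, hab⟩ := exists_exit _ (prim_rtg hP) (T i) (hVn.mono (hsub i)) hi
    apply hb
    rw [he]
    simp only [T, Finset.mem_filter, Finset.mem_univ, true_and] at ha ⊢
    obtain ⟨u, hu, e, h⟩ := ha
    exact ⟨u, hu, _, h.append (SW.single hab)⟩) d
  have h0 := Finset.card_le_card hT0
  rw [hC.card] at h0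
  have h1 : T d = Finset.univ := by
    apply Finset.eq_univ_of_card
    have := Finset.card_le_univ (T d)
    simp only [Fintype.card_fin] at *
    omega
  have h2 : v ∈ T d := by rw [h1]; exact Finset.mem_univ v
  simpa [T] using h2

open Classical in
/-- some vertex of `X` reaches a vertex of an `s`-cycle in exactly `s * (n - k)` steps -/
lemma X_reach (hP : Primitive (Underlying S)) {w : Fin n} {s : ℕ} {ε : ℤ} (hs : 0 < s)
    (hw : SW S w w s ε) (X : Finset (Fin n)) (hX : 0 < X.card) :
    ∃ x ∈ X, ∃ e, SW S x w (s * (n - X.card)) e := by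
  let T : ℕ → Finset (Fin n) := fun i => Finset.univ.filter (fun x => ∃ e, SW S x w (s * i) e)
  have hsub : ∀ i, w ∈ T i := by
    intro i
    simp only [T, Finset.mem_filter, Finset.mem_univ, true_and]
    exact ⟨_, (hw.pow i).cast (mul_comm _ _) rfl⟩
  have hmono : ∀ i, T i ⊆ T (i + 1) := by
    intro i v hv
    simp only [T, Finset.mem_filter, Finset.mem_univ, true_and] at hv ⊢
    obtain ⟨e, h⟩ := hv
    exact ⟨_, (h.append hw).cast (by ring) rfl⟩
  have := grow T hmono (by
    intro i hi he
    obtain ⟨a, ha, b, hb, e, hab⟩ := exists_exit _ (prim_rtg_pow hP s hs) (T i) ⟨w, hsub i⟩ hi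
    apply hb
    rw [he]
    simp only [T, Finset.mem_filter, Finset.mem_univ, true_and] at ha ⊢
    obtain ⟨e', h⟩ := ha
    exact ⟨_, (hab.append h).cast (by ring) rfl⟩) (n - X.card)
  have h0 := Finset.card_pos.2 ⟨w, hsub 0⟩
  have hXn := Finset.card_le_univ X
  simp only [Fintype.card_fin] at hXn
  have : (X ∩ T (n - X.card)).Nonempty := by
    apply Finset.inter_nonempty_of_card_lt_card_add_card (Finset.subset_univ X)
      (Finset.subset_univ _)
    simp only [Finset.card_univ, Fintype.card_fin]
    omega
  obtain ⟨x, hx⟩ := this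
  rw [Finset.mem_inter] at hx
  refine ⟨x, hx.1, ?_⟩
  simpa [T] using hx.2

open Classical in
lemma dist_le (hP : Primitive (Underlying S)) (u v : Fin n) :
    ∃ d ≤ n - 1, ∃ e, SW S u v d e := by
  let T : ℕ → Finset (Fin n) := fun i => Finset.univ.filter (fun v => ∃ d ≤ i, ∃ e, SW S u v d e)
  have hsub : ∀ i, u ∈ T i := by
    intro i
    simp only [T, Finset.mem_filter, Finset.mem_univ, true_and]
    exact ⟨0, by omega, 1, SW.nil u⟩
  have := grow T (by
    intro i v hv
    simp only [T, Finset.mem_filter, Finset.mem_univ, true_and] at hv ⊢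
    obtain ⟨d, hd, h⟩ := hv
    exact ⟨d, by omega, h⟩) (by
    intro i hi he
    obtain ⟨a, ha, b, hb, hab⟩ := exists_exit _ (prim_rtg hP) (T i) ⟨u, hsub i⟩ hi
    apply hb
    rw [he]
    simp only [T, Finset.mem_filter, Finset.mem_univ, true_and] at ha ⊢
    obtain ⟨d, hd, e, h⟩ := ha
    exact ⟨d + 1, by omega, _, h.append (SW.single hab)⟩) (n - 1)
  have h0 := Finset.card_pos.2 ⟨u, hsub 0⟩
  have h1 : T (n - 1) = Finset.univ := by
    apply Finset.eq_univ_of_card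
    have := Finset.card_le_univ (T (n - 1))
    simp only [Fintype.card_fin] at *
    omega
  have h2 : v ∈ T (n - 1) := by rw [h1]; exact Finset.mem_univ v
  simpa [T] using h2

/-- every vertex is the endpoint of an SSSD pair of length `m` -/
def QQ (S : Fin n → Fin n → ℤ) (m : ℕ) : Prop := ∀ v, ∃ w, HasSSSD S w v m

lemma sssd_pre (hP : Primitive (Underlying S)) {w v : Fin n} {m m' : ℕ} (h : HasSSSD S w v m)
    (hm : m ≤ m') : ∃ w', HasSSSD S w' v m' := by
  induction m', hm using Nat.le_induction with
  | base => exact ⟨w, h⟩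
  | succ m' hm ih =>
    obtain ⟨w', h'⟩ := ih
    obtain ⟨u, hu⟩ := prim_pred hP w'
    refine ⟨u, ?_⟩
    have := SSSD.pre (SW.single hu) h'
    rwa [Nat.add_comm] at this

lemma QQ_of_le (hP : Primitive (Underlying S)) {m : ℕ}
    (h : ∀ v, ∃ w, ∃ m' ≤ m, HasSSSD S w v m') : QQ S m := by
  intro v
  obtain ⟨w, m', hm, h⟩ := h v
  exact sssd_pre hP h hm

lemma Cyc.le {V : Finset (Fin n)} {p : ℕ} {ε : ℤ} (h : Cyc S V p ε) : p ≤ n := by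
  have := Finset.card_le_univ V
  simp only [Fintype.card_fin] at this
  rw [← h.card]; exact this

lemma Cyc.nonempty {V : Finset (Fin n)} {p : ℕ} {ε : ℤ} (h : Cyc S V p ε) : V.Nonempty := by
  rw [← Finset.card_pos, h.card]; exact h.pos

lemma Cyc.mem_of_full {V : Finset (Fin n)} {ε : ℤ} (h : Cyc S V n ε) (v : Fin n) : v ∈ V := by
  have : V = Finset.univ := Finset.eq_univ_of_card _ (by rw [h.card]; simp)
  rw [this]; exact Finset.mem_univ v

lemma Cyc.sign (hS : SignPattern S) {V : Finset (Fin n)} {p : ℕ} {ε : ℤ} (h : Cyc S V p ε) :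
    ε = 1 ∨ ε = -1 := by
  obtain ⟨u, hu⟩ := h.nonempty
  exact (h.cl u hu).sign hS

section pair
variable {V1 V2 : Finset (Fin n)} {p q a b : ℕ} {ε δ : ℤ}

lemma pair_at {z : Fin n} (h1 : SW S z z p ε) (h2 : SW S z z q δ) (hab : a * p = b * q)
    (hne : ε ^ a ≠ δ ^ b) : HasSSSD S z z (a * p) :=
  hasSSSD_iff.2 ⟨_, _, h1.pow a, (h2.pow b).cast hab.symm rfl, hne⟩

lemma pair1 (hP : Primitive (Underlying S)) (h1 : Cyc S V1 p ε) (h2 : Cyc S V2 q δ)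
    (hab : a * p = b * q) (hne : ε ^ a ≠ δ ^ b) : QQ S (a * p + 2 * (n - 1)) := by
  apply QQ_of_le hP
  intro v
  obtain ⟨z1, hz1⟩ := h1.nonempty
  obtain ⟨z2, hz2⟩ := h2.nonempty
  obtain ⟨d, hd, e, hw⟩ := dist_le hP z1 z2
  obtain ⟨d', hd', e', hw'⟩ := dist_le hP z2 v
  refine ⟨z1, a * p + d + d', by omega, ?_⟩
  apply SSSD.post _ hw'
  rw [hasSSSD_iff]
  refine ⟨_, _, ((h1.cl z1 hz1).pow a).append hw,
    (hw.append ((h2.cl z2 hz2).pow b)).cast (by rw [hab]; ring) rfl, ?_⟩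
  rw [mul_comm]
  exact fun h => hne (mul_left_cancel₀ hw.ne_zero h)

lemma pair2 (hP : Primitive (Underlying S)) (h1 : Cyc S V1 p ε) (h2 : Cyc S V2 q δ)
    (hab : a * p = b * q) (hne : ε ^ a ≠ δ ^ b) (hi : (V1 ∩ V2).Nonempty) :
    QQ S (a * p + (n - 1)) := by
  apply QQ_of_le hP
  intro v
  obtain ⟨z, hz⟩ := hi
  rw [Finset.mem_inter] at hz
  obtain ⟨d, hd, e, hw⟩ := dist_le hP z v
  exact ⟨z, a * p + d, by omega, SSSD.post (pair_at (h1.cl z hz.1) (h2.cl z hz.2) hab hne) hw⟩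

lemma pair3 (hP : Primitive (Underlying S)) (h1 : Cyc S V1 n ε) (h2 : Cyc S V2 q δ)
    (hab : a * n = b * q) (hne : ε ^ a ≠ δ ^ b) :
    QQ S (a * n + (n - q)) := by
  intro v
  have := h2.le
  obtain ⟨z, hz, e, hw⟩ := cyc_reach hP h2 (n - q) (by omega) v
  exact ⟨z, SSSD.post (pair_at (h1.cl z (h1.mem_of_full z)) (h2.cl z hz) hab hne) hw⟩

lemma QQ_mono (hP : Primitive (Underlying S)) {m m' : ℕ} (h : QQ S m) (hm : m ≤ m') : QQ S m' := by
  intro v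
  obtain ⟨w, hw⟩ := h v
  exact sssd_pre hP hw hm

lemma same_QQ (hn : 6 ≤ n) (hP : Primitive (Underlying S)) (h1 : Cyc S V1 p ε)
    (h2 : Cyc S V2 p δ) (hne : ε ≠ δ) : QQ S (n * (n - 1) - 4) := by
  apply QQ_mono hP (pair1 hP h1 h2 (a := 1) (b := 1) rfl (by simpa using hne))
  have := h1.le
  obtain ⟨m, rfl⟩ := Nat.exists_eq_add_of_le hn
  have e : (6 + m) * (6 + m - 1) = m * m + 11 * m + 30 := by
    rw [show 6 + m - 1 = 5 + m by omega]; ring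
  rw [e]
  have : 0 ≤ m * m := Nat.zero_le _
  omega

lemma dist_QQ (hn : 6 ≤ n) (hP : Primitive (Underlying S)) (h1 : Cyc S V1 p ε)
    (h2 : Cyc S V2 q δ) (hne : ε ^ q ≠ δ ^ p) : QQ S (n * (n - 1) - 4) ∨ (p = n ∧ q = n - 1) ∨
      (p = n - 1 ∧ q = n) := by
  by_contra hcon
  push Not at hcon
  obtain ⟨hQ, hc1, hc2⟩ := hcon
  apply hQ
  have hp := h1.le
  have hq := h2.le
  by_cases hpq : p = q
  · subst hpq
    exact same_QQ hn hP h1 h2 (fun h => hne (by rw [h]))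
  obtain ⟨m, rfl⟩ := Nat.exists_eq_add_of_le hn
  have e : (6 + m) * (6 + m - 1) = m * m + 11 * m + 30 := by
    rw [show 6 + m - 1 = 5 + m by omega]; ring
  rw [e]
  rcases Nat.lt_or_ge p (6 + m) with hp' | hp'
  · rcases Nat.lt_or_ge q (6 + m) with hq' | hq'
    · by_cases hi : (V1 ∩ V2).Nonempty
      · apply QQ_mono hP (pair2 hP h1 h2 (mul_comm q p) hne hi)
        have : q * p ≤ (5 + m) * (4 + m) := by
          rcases Nat.lt_or_gt_of_ne hpq with h | h
          · exact Nat.mul_le_mul (by omega) (by omega)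
          · rw [mul_comm]; exact Nat.mul_le_mul (by omega) (by omega)
        have e2 : (5 + m) * (4 + m) = m * m + 9 * m + 20 := by ring
        omega
      · apply QQ_mono hP (pair1 hP h1 h2 (mul_comm q p) hne)
        have hd : Disjoint V1 V2 := by
          rw [Finset.disjoint_iff_inter_eq_empty]; exact Finset.not_nonempty_iff_eq_empty.1 hi
        have h3 := Finset.card_union_of_disjoint hd
        have h4 := Finset.card_le_univ (V1 ∪ V2)
        rw [h3, h1.card, h2.card, Fintype.card_fin] at h4
        have : 4 * (q * p) ≤ (6 + m) * (6 + m) := by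
          have : (q + p) * (q + p) ≤ (6 + m) * (6 + m) :=
            Nat.mul_le_mul (by omega) (by omega)
          have h5 : 4 * (q * p) ≤ (q + p) * (q + p) := by nlinarith [sq_nonneg ((q : ℤ) - p)]
          omega
        have e2 : (6 + m) * (6 + m) = m * m + 12 * m + 36 := by ring
        have : 0 ≤ m * m := Nat.zero_le _
        omega
    · have hqn : q = 6 + m := by omega
      subst hqn
      apply QQ_mono hP (pair3 hP h2 h1 (mul_comm p _) hne.symm)
      obtain ⟨j, hj⟩ : ∃ j, 4 + m = p + j := ⟨4 + m - p, by omega⟩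
      have : p * (6 + m) + (6 + m - p) + j * (5 + m) = (4 + m) * (6 + m) + 2 := by
        rw [show 6 + m - p = 2 + j by omega]
        have : (4 + m) * (6 + m) = p * (6 + m) + j * (5 + m) + j := by rw [hj]; ring
        omega
      have e2 : (4 + m) * (6 + m) = m * m + 10 * m + 24 := by ring
      omega
  · have hqn : p = 6 + m := by omega
    subst hqn
    apply QQ_mono hP (pair3 hP h1 h2 (mul_comm q _) hne)
    obtain ⟨j, hj⟩ : ∃ j, 4 + m = q + j := ⟨4 + m - q, by omega⟩
    have : q * (6 + m) + (6 + m - q) + j * (5 + m) = (4 + m) * (6 + m) + 2 := by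
      rw [show 6 + m - q = 2 + j by omega]
      have : (4 + m) * (6 + m) = q * (6 + m) + j * (5 + m) + j := by rw [hj]; ring
      omega
    have e2 : (4 + m) * (6 + m) = m * m + 10 * m + 24 := by ring
    omega

end pair

lemma closed_succ (hn : 0 < n) (hP : Primitive (Underlying S)) : ∃ (u : Fin n) (l : ℕ) (ε δ : ℤ),
    SW S u u l ε ∧ SW S u u (l + 1) δ := by
  obtain ⟨p, hp, h⟩ := prim_walk hP
  obtain ⟨e, h1⟩ := h p le_rfl ⟨0, hn⟩ ⟨0, hn⟩
  obtain ⟨e', h2⟩ := h (p + 1) (by omega) ⟨0, hn⟩ ⟨0, hn⟩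
  exact ⟨_, _, _, _, h1, h2⟩

lemma exists_cyc_not_dvd (hn : 0 < n) (hP : Primitive (Underlying S)) (d : ℕ) (hd : 2 ≤ d) :
    ∃ V p ε, Cyc S V p ε ∧ ¬ d ∣ p := by
  by_contra hcon
  push Not at hcon
  have := closed_ind (S := S) (fun l _ => d ∣ l) (by simp) (fun l _ l' _ h h' => dvd_add h h') hcon
  obtain ⟨u, l, e, e', h1, h2⟩ := closed_succ hn hP
  have a := this _ _ _ h1
  have b := this _ _ _ h2
  have : d ∣ 1 := (Nat.dvd_add_right a).1 b
  have := Nat.le_of_dvd one_pos this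
  omega

lemma exists_dist (hn : 0 < n) (hS : SignPattern S) (hP : Primitive (Underlying S))
    (hN : NonPowerful S) : ∃ V1 p ε V2 q δ, Cyc S V1 p ε ∧ Cyc S V2 q δ ∧ ε ^ q ≠ δ ^ p := by
  by_contra hcon
  push Not at hcon
  obtain ⟨V0, p0, ε0, hC0, hodd⟩ := exists_cyc_not_dvd hn hP 2 le_rfl
  have hodd : Odd p0 := by rw [← Nat.not_even_iff_odd, even_iff_two_dvd]; exact hodd
  have h0 := hC0.sign hS
  have h00 : ε0 * ε0 = 1 := by rcases h0 with h | h <;> rw [h] <;> norm_num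
  have h0p : ε0 ^ p0 = ε0 := by
    rcases h0 with h | h <;> rw [h]
    · simp
    · exact hodd.neg_one_pow
  have hc : ∀ V p ε, Cyc S V p ε → ε = ε0 ^ p := by
    intro V p ε hC
    rw [hcon _ _ _ _ _ _ hC0 hC]
    rcases hC.sign hS with h | h <;> rw [h]
    · simp
    · exact hodd.neg_one_pow.symm
  have key := closed_ind (S := S) (fun l ε => ε = ε0 ^ l) (by simp)
    (fun l ε l' ε' h h' => by rw [h, h', pow_add]) hc
  obtain ⟨u, v, l, h⟩ := hN
  obtain ⟨p, hp, hw⟩ := prim_walk hP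
  obtain ⟨e, h2⟩ := hw p le_rfl v u
  obtain ⟨a, b, ha, hb, hab⟩ := hasSSSD_iff.1 (SSSD.post h h2)
  exact hab ((key _ _ _ ha).trans (key _ _ _ hb).symm)

lemma X_walk (hn : 6 ≤ n) (hP : Primitive (Underlying S)) (X : Finset (Fin n)) (hX : 0 < X.card)
    (v : Fin n) : ∃ x ∈ X, ∃ e, SW S x v ((n - X.card) * (n - 1) + 1) e := by
  have hXn := Finset.card_le_univ X
  simp only [Fintype.card_fin] at hXn
  rcases Nat.lt_or_ge X.card n with hlt | hge
  · obtain ⟨V, s, ε, hC, hns⟩ := exists_cyc_not_dvd (by omega) hP n (by omega)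
    have hs := hC.le
    have hs' : s ≠ n := fun h => hns (by rw [h])
    obtain ⟨j, hj⟩ : ∃ j, n - X.card = j + 1 := ⟨n - X.card - 1, by omega⟩
    have hle : s * j ≤ (n - 1) * j := Nat.mul_le_mul_right _ (by omega)
    have e1 : s * (j + 1) = s * j + s := by ring
    have e2 : (j + 1) * (n - 1) = (n - 1) * j + (n - 1) := by ring
    obtain ⟨w, hw, e, hwv⟩ := cyc_reach hP hC ((n - X.card) * (n - 1) + 1 - s * (n - X.card))
      (by rw [hj]; omega) v
    obtain ⟨x, hx, e', hxw⟩ := X_reach hP hC.pos (hC.cl w hw) X hX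
    refine ⟨x, hx, _, (hxw.append hwv).cast ?_ rfl⟩
    rw [hj]; omega
  · have : X = Finset.univ := Finset.eq_univ_of_card _ (by simp; omega)
    obtain ⟨u, hu⟩ := prim_pred hP v
    refine ⟨u, by rw [this]; exact Finset.mem_univ _, _, (SW.single hu).cast ?_ rfl⟩
    rw [show n - X.card = 0 by omega]; simp

/-- upper bound from `QQ` -/
lemma X_QQ (hn : 6 ≤ n) (hP : Primitive (Underlying S)) (X : Finset (Fin n)) (hX : 0 < X.card)
    {m : ℕ} (hQ : QQ S m) (v : Fin n) :
    ∃ x ∈ X, HasSSSD S x v ((n - X.card) * (n - 1) + 1 + m) := by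
  obtain ⟨w, hw⟩ := hQ v
  obtain ⟨x, hx, e, h⟩ := X_walk hn hP X hX w
  exact ⟨x, hx, SSSD.pre h hw⟩

/-- upper bound when there is a distinguished pair of lengths `n`, `n-1` -/
lemma X_HC (hn : 6 ≤ n) (hP : Primitive (Underlying S)) (X : Finset (Fin n)) (hX : 0 < X.card)
    {V1 V2 : Finset (Fin n)} {η γ : ℤ} (h1 : Cyc S V1 n η) (h2 : Cyc S V2 (n - 1) γ)
    (hne : η ^ (n - 1) ≠ γ ^ n) (v : Fin n) :
    ∃ x ∈ X, HasSSSD S x v ((n - X.card) * (n - 1) + 1 + n * (n - 1)) := by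
  obtain ⟨w, hw, e, hwv⟩ := cyc_reach hP h2 1 (by omega) v
  obtain ⟨x, hx, e', hxw⟩ := X_reach hP h2.pos (h2.cl w hw) X hX
  have := pair_at (h1.cl w (h1.mem_of_full w)) (h2.cl w hw) (mul_comm (n - 1) n) hne
  refine ⟨x, hx, ?_⟩
  have h3 := SSSD.pre hxw (SSSD.post this hwv)
  convert h3 using 1
  ring

/-- In the extremal case there are no cycles of length at most `n-2`. -/
lemma no_short (hn : 6 ≤ n) (hS : SignPattern S) (hP : Primitive (Underlying S))
    (hQ : ¬ QQ S (n * (n - 1) - 4))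
    {V1 V2 : Finset (Fin n)} {η γ : ℤ} (h1 : Cyc S V1 n η) (h2 : Cyc S V2 (n - 1) γ)
    (hne : η ^ (n - 1) ≠ γ ^ n) {V : Finset (Fin n)} {q : ℕ} {ε : ℤ} (h : Cyc S V q ε) :
    n - 1 ≤ q := by
  by_contra hlt
  have hH : η ^ q = ε ^ n := by
    by_contra hc
    rcases dist_QQ hn hP h1 h hc with h' | h' | h'
    · exact hQ h'
    · omega
    · omega
  have hC : γ ^ q = ε ^ (n - 1) := by
    by_contra hc
    rcases dist_QQ hn hP h2 h hc with h' | h' | h'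
    · exact hQ h'
    · omega
    · omega
  have sη := h1.sign hS
  have sγ := h2.sign hS
  have sε := h.sign hS
  have ev : ∀ (x : ℤ) (m : ℕ), (x = 1 ∨ x = -1) → Even m → x ^ m = 1 := by
    rintro x m (rfl | rfl) hm
    · simp
    · exact hm.neg_one_pow
  have od : ∀ (x : ℤ) (m : ℕ), (x = 1 ∨ x = -1) → Odd m → x ^ m = x := by
    rintro x m (rfl | rfl) hm
    · simp
    · exact hm.neg_one_pow
  have key : Even q ∧ γ ^ (n - q) ≠ η ^ (n - q - 1) * ε := by
    rcases Nat.even_or_odd n with he | ho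
    · have ho1 : Odd (n - 1) := Nat.Even.sub_odd (by omega) he odd_one
      rw [od η _ sη ho1, ev γ _ sγ he] at hne
      have hη : η = -1 := by tauto
      rw [ev ε _ sε he] at hH
      rw [od ε _ sε ho1] at hC
      have hq : Even q := by
        by_contra hq
        rw [Nat.not_even_iff_odd] at hq
        rw [od η _ sη hq] at hH
        omega
      rw [ev γ _ sγ hq] at hC
      have hj : Even (n - q) := he.tsub hq
      have hj1 : Odd (n - q - 1) := Nat.Even.sub_odd (by omega) hj odd_one
      refine ⟨hq, ?_⟩
      rw [ev γ _ sγ hj, od η _ sη hj1, ← hC, hη]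
      norm_num
    · have he1 : Even (n - 1) := Nat.Odd.sub_odd ho odd_one
      rw [ev η _ sη he1, od γ _ sγ ho] at hne
      have hγ : γ = -1 := by
        rcases sγ with h | h
        · exact absurd h.symm hne
        · exact h
      rw [ev ε _ sε he1] at hC
      rw [od ε _ sε ho] at hH
      have hq : Even q := by
        by_contra hq
        rw [Nat.not_even_iff_odd] at hq
        rw [od γ _ sγ hq] at hC
        omega
      rw [ev η _ sη hq] at hH
      have hj : Odd (n - q) := Nat.Odd.sub_even (by omega) ho hq
      have hj1 : Even (n - q - 1) := Nat.Odd.sub_odd hj odd_one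
      refine ⟨hq, ?_⟩
      rw [od γ _ sγ hj, ev η _ sη hj1, ← hH, hγ]
      norm_num
  obtain ⟨hq, hsg⟩ := key
  have hq2 : 2 ≤ q := by
    have := h.pos
    obtain ⟨c, hc⟩ := hq
    omega
  have hi : (V ∩ V2).Nonempty := by
    apply Finset.inter_nonempty_of_card_lt_card_add_card (Finset.subset_univ V)
      (Finset.subset_univ V2)
    rw [h.card, h2.card]
    simp only [Finset.card_univ, Fintype.card_fin]
    omega
  obtain ⟨z, hz⟩ := hi
  rw [Finset.mem_inter] at hz
  apply hQ
  apply QQ_of_le hP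
  intro v
  obtain ⟨d, hd, e, hw⟩ := dist_le hP z v
  have w1 := (h2.cl z hz.2).pow (n - q)
  have w2 := ((h1.cl z (h1.mem_of_full z)).pow (n - q - 1)).append (h.cl z hz.1)
  have hlen : (n - q - 1) * n + q = (n - q) * (n - 1) := by
    obtain ⟨j, hj⟩ : ∃ j, n = q + j + 1 := ⟨n - q - 1, by omega⟩
    rw [show n - q - 1 = j by omega, show n - q = j + 1 by omega, show n - 1 = q + j by omega, hj]
    ring
  refine ⟨z, (n - q) * (n - 1) + d, ?_, SSSD.post (hasSSSD_iff.2 ⟨_, _, w1, w2.cast hlen rfl, hsg⟩) hw⟩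
  have h3 : (n - q) * (n - 1) ≤ (n - 2) * (n - 1) := Nat.mul_le_mul_right _ (by omega)
  have h4 : n * (n - 1) = (n - 2) * (n - 1) + 2 * (n - 1) := by
    rw [← Nat.add_mul]; congr 1; omega
  omega

/-- cyclic structure in the extremal case -/
lemma structure_of_min (hn : 6 ≤ n)
    (hmin : ∀ l u ε, SW S u u l ε → 0 < l → n - 1 ≤ l)
    {V : Finset (Fin n)} {η : ℤ} (h1 : Cyc S V n η) :
    ∃ h : ℕ → Fin n, (∀ i, S (h i) (h (i + 1)) ≠ 0) ∧ (∀ i, h (i + n) = h i) ∧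
      (∀ i v, ∃ d < n, v = h (i + d)) ∧
      ∀ i < n, ∀ v, S (h i) v ≠ 0 → v = h (i + 1) ∨ (v = h (i + 2) ∧ (i = n - 2 ∨ i = n - 1)) := by
  obtain ⟨h, ha, hp, hV⟩ := h1.seq
  have hpm : ∀ m i, h (i + n * m) = h i := by
    intro m
    induction m with
    | zero => simp
    | succ m ih => intro i; rw [Nat.mul_succ, ← Nat.add_assoc, hp, ih]
  have hsurj : ∀ i v, ∃ d < n, v = h (i + d) := by
    intro i v
    have hv := h1.mem_of_full v
    rw [hV] at hv
    simp only [Finset.mem_image, Finset.mem_range] at hv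
    obtain ⟨j, hj, rfl⟩ := hv
    have hle : i ≤ n * i := Nat.le_mul_of_pos_left i (by omega)
    refine ⟨(j + n * i - i) % n, Nat.mod_lt _ (by omega), ?_⟩
    rw [← hpm ((j + n * i - i) / n) (i + _), Nat.add_assoc, Nat.mod_add_div,
      show i + (j + n * i - i) = j + n * i by omega, hpm]
  have hseg : ∀ i d, ∃ e, SW S (h i) (h (i + d)) d e := fun i d => ⟨_, sw_seg h i d (fun m _ => ha _)⟩
  have harc : ∀ i v, S (h i) v ≠ 0 → v = h (i + 1) ∨ v = h (i + 2) := by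
    intro i v hv
    obtain ⟨d, hd, rfl⟩ := hsurj (i + 1) v
    obtain ⟨e, hw⟩ := hseg (i + 1 + d) (n - (1 + d))
    rw [show i + 1 + d + (n - (1 + d)) = i + n by omega, hp] at hw
    have := hmin _ _ _ (hw.append (SW.single hv)) (by omega)
    rcases (show d = 0 ∨ d = 1 by omega) with rfl | rfl
    · left; rfl
    · right; rfl
  have htwo : ∀ i j, j ≤ n - 4 → S (h i) (h (i + 2)) ≠ 0 →
      S (h (i + 2 + j)) (h (i + 2 + j + 2)) ≠ 0 → False := by
    intro i j hj c1 c2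
    obtain ⟨e, w1⟩ := hseg (i + 2) j
    obtain ⟨e', w2⟩ := hseg (i + 2 + j + 2) (n - 4 - j)
    rw [show i + 2 + j + 2 + (n - 4 - j) = i + n by omega, hp] at w2
    have := hmin _ _ _ ((SW.single c1).append (w1.append ((SW.single c2).append w2))) (by omega)
    omega
  by_cases hch : ∃ i, S (h i) (h (i + 2)) ≠ 0
  · obtain ⟨i0, hc, hnc⟩ : ∃ i, S (h i) (h (i + 2)) ≠ 0 ∧
        ¬ S (h (i + n - 1)) (h (i + n - 1 + 2)) ≠ 0 := by
      obtain ⟨i, hi⟩ := hch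
      by_cases hc : S (h (i + n - 1)) (h (i + n - 1 + 2)) ≠ 0
      · refine ⟨i + n - 1, hc, fun hc2 => ?_⟩
        rw [show i + n - 1 + n - 1 + 2 = i + n + n by omega, hp,
          show i + n - 1 + n - 1 = i + n - 2 + n by omega, hp] at hc2
        apply htwo i (n - 4) le_rfl hi
        rw [show i + 2 + (n - 4) = i + n - 2 by omega, show i + n - 2 + 2 = i + n by omega]
        exact hc2
      · exact ⟨i, hi, hc⟩
    refine ⟨fun m => h (i0 + 2 + m), fun i => ha _, fun i => ?_, fun i v => ?_, ?_⟩
    · simp only; rw [← Nat.add_assoc, hp]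
    · obtain ⟨d, hd, e⟩ := hsurj (i0 + 2 + i) v
      exact ⟨d, hd, by rw [e, Nat.add_assoc]⟩
    · intro i hi v hv
      rcases harc _ _ hv with e | e
      · left; exact e
      · right
        refine ⟨e, ?_⟩
        by_contra hcon
        rcases (show i ≤ n - 4 ∨ i = n - 3 by omega) with h' | h'
        · exact htwo i0 i h' hc (e ▸ hv)
        · apply hnc
          have := e ▸ hv
          simp only at this
          rw [show i0 + 2 + i + 2 = i0 + n - 1 + 2 by omega,
            show i0 + 2 + i = i0 + n - 1 by omega] at this
          exact this
  · refine ⟨h, ha, hp, hsurj, ?_⟩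
    intro i hi v hv
    rcases harc _ _ hv with e | e
    · left; exact e
    · exact absurd ⟨i, e ▸ hv⟩ hch

lemma arith_lower {N j i a b a' b' p : ℕ} (hj : j ≤ N) (hi : i = 0 ∨ (j < i ∧ i ≤ N))
    (hp : p + 1 = (N + 1) * N + j * N)
    (h1 : N + (N + 1) * a + N * b = i + p) (h2 : N + (N + 1) * a' + N * b' = i + p)
    (hlt : a < a') : False := by
  have hb : N + 1 ≤ b := by
    have e : (N + 1) * a' + N * b' = (N + 1) * a + N * b := by omega
    obtain ⟨c, rfl⟩ := Nat.exists_eq_add_of_lt hlt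
    have e1 : (N + 1) * (a + c + 1) = (N + 1) * a + N * (c + 1) + (c + 1) := by ring
    have e2 : N * (b' + (c + 1)) + (c + 1) = N * b := by
      rw [Nat.mul_add]; omega
    have hlt : b' + (c + 1) < b := by
      by_contra hcon
      have := Nat.mul_le_mul_left N (not_lt.1 hcon)
      omega
    obtain ⟨d, rfl⟩ := Nat.exists_eq_add_of_lt hlt
    have e3 : N * (b' + (c + 1) + d + 1) = N * (b' + (c + 1)) + N * d + N := by ring
    have : N ≤ c + 1 := by
      have := Nat.zero_le (N * d)
      omega
    omega
  obtain ⟨b0, rfl⟩ := Nat.exists_eq_add_of_le hb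
  have e : i + j * N = (a + 1) * (N + 1) + N * b0 := by
    have e1 : N + (N + 1) * a + N * (N + 1 + b0) + 1 =
      (N + 1) * N + ((a + 1) * (N + 1) + N * b0) := by ring
    omega
  have e' : i + j * N = (a + 1 + b0) * N + (a + 1) := by rw [e]; ring
  rcases Nat.lt_trichotomy j (a + 1 + b0) with h | h | h
  · obtain ⟨c, hc⟩ := Nat.exists_eq_add_of_lt h
    rw [hc] at e'
    have : (j + c + 1) * N = j * N + c * N + N := by ring
    have := Nat.zero_le (c * N)
    omega
  · rw [← h] at e'
    omega
  · obtain ⟨c, hc⟩ := Nat.exists_eq_add_of_lt h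
    rw [hc] at e'
    have : (a + 1 + b0 + c + 1) * N = (a + 1 + b0) * N + c * N + N := by ring
    have := Nat.zero_le (c * N)
    omega

lemma lower (hn : 6 ≤ n) (hS : SignPattern S) {γ : ℤ}
    (hsgn : ∀ u ε, SW S u u (n - 1) ε → ε = γ)
    (h : ℕ → Fin n) (ha : ∀ i, S (h i) (h (i + 1)) ≠ 0) (hp : ∀ i, h (i + n) = h i)
    (hsurj : ∀ i v, ∃ d < n, v = h (i + d))
    (harc : ∀ i < n, ∀ v, S (h i) v ≠ 0 →
      v = h (i + 1) ∨ (v = h (i + 2) ∧ (i = n - 2 ∨ i = n - 1)))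
    (k : ℕ) (hk1 : 1 ≤ k) (hkn : k ≤ n) :
    ∃ X : Finset (Fin n), X.card = k ∧ ∃ v, ∀ x ∈ X,
      ¬ HasSSSD S x v (n * (n - 1) + (n - k) * (n - 1) - 1) := by
  have hs0 : ∀ v, ∃ d < n, v = h d := fun v => by simpa using hsurj 0 v
  choose pos hpos hpos' using hs0
  have hinj : Set.InjOn h (Finset.range n : Finset ℕ) := by
    apply Finset.injOn_of_card_image_eq
    have : (Finset.range n).image h = Finset.univ := by
      apply Finset.eq_univ_of_forall
      intro v
      rw [hpos' v]
      exact Finset.mem_image_of_mem _ (by simpa using hpos v)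
    rw [this]; simp
  have hph : ∀ i < n, pos (h i) = i := by
    intro i hi
    apply hinj
    · simpa using hpos _
    · simpa using hi
    · exact (hpos' _).symm
  set σ : ℕ → ℤ := fun i => ∏ m ∈ Finset.range i, S (h m) (h (m + 1)) with hσ
  have hσs : ∀ i, σ (i + 1) = σ i * S (h i) (h (i + 1)) := fun i => Finset.prod_range_succ _ _
  have hσ0 : σ 0 = 1 := by simp [hσ]
  have hσw : ∀ i, SW S (h 0) (h i) i (σ i) := by
    intro i
    have := sw_seg (S := S) h 0 i (fun m _ => ha _)
    simpa using this
  have hσ2 : ∀ i, σ i * σ i = 1 := by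
    intro i
    rcases (hσw i).sign hS with e | e <;> rw [e] <;> norm_num
  have main : ∀ u v l ε, SW S u v l ε → ∃ α β : ℕ, pos v + n * α + (n - 1) * β = pos u + l ∧
      ε = σ (pos u) * σ (pos v) * σ n ^ α * γ ^ β := by
    intro u v l ε hw
    induction hw with
    | nil u => exact ⟨0, 0, by simp, by simp [hσ2]⟩
    | @cons u v w l ε a hw ih =>
      obtain ⟨α, β, e1, e2⟩ := ih
      have hu := hpos u
      have hu' := hpos' u
      generalize pos u = i at *
      subst hu'
      have fin : ∀ (α' β' : ℕ), pos v + n * α' + (n - 1) * β' = i + 1 →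
          S (h i) v = σ i * σ (pos v) * σ n ^ α' * γ ^ β' → ∃ α β : ℕ,
          pos w + n * α + (n - 1) * β = i + (l + 1) ∧
            S (h i) v * ε = σ i * σ (pos w) * σ n ^ α * γ ^ β := by
        intro α' β' f1 f2
        refine ⟨α + α', β + β', ?_, ?_⟩
        · rw [Nat.mul_add, Nat.mul_add]; omega
        · rw [f2, e2]
          have := hσ2 (pos v)
          rw [pow_add, pow_add]
          linear_combination (σ i * σ (pos w) * σ n ^ α * σ n ^ α' * γ ^ β * γ ^ β') * this
      rcases harc i hu v a with rfl | ⟨rfl, hi⟩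
      · rcases Nat.lt_or_ge (i + 1) n with hlt | hge
        · apply fin 0 0
          · rw [hph _ hlt]; simp
          · rw [hph _ hlt, hσs]
            linear_combination (-S (h i) (h (i + 1))) * hσ2 i
        · have hin : i + 1 = n := by omega
          have h0 : pos (h (i + 1)) = 0 := by
            rw [hin, show h n = h 0 by simpa using hp 0]
            exact hph 0 (by omega)
          apply fin 1 0
          · rw [h0]; omega
          · rw [h0, hσ0]
            have := hσs i
            rw [hin] at this ⊢
            rw [this]
            linear_combination (-S (h i) (h n)) * hσ2 i
      · rcases hi with hi | hi
        · have hin : i + 2 = n := by omega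
          have h0' : h (i + 2) = h 0 := by rw [hin]; simpa using hp 0
          rw [h0'] at a fin ⊢
          have h0 := hph 0 (by omega)
          have hc := hsgn _ _ (((hσw i).append (SW.single a)).cast (by omega) rfl)
          apply fin 0 1
          · rw [h0]; omega
          · rw [h0, hσ0, ← hc]
            linear_combination (-S (h i) (h 0)) * hσ2 i
        · have hin : i + 2 = 1 + n := by omega
          have h0' : h (i + 2) = h 1 := by rw [hin]; exact hp 1
          rw [h0'] at a fin ⊢
          have h0 := hph 1 (by omega)
          have hw1 := sw_seg (S := S) h 1 (n - 2) (fun m _ => ha _)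
          rw [show 1 + (n - 2) = i by omega] at hw1
          have hc := hsgn _ _ ((hw1.append (SW.single a)).cast (by omega) rfl)
          have hq := Finset.prod_range_add (fun m => S (h m) (h (m + 1))) 1 (n - 2)
          rw [show 1 + (n - 2) = i by omega] at hq
          have hq' : σ i = σ 1 * ∏ m ∈ Finset.range (n - 2), S (h (1 + m)) (h (1 + m + 1)) := hq
          apply fin 0 1
          · rw [h0]; omega
          · rw [h0, ← hc]
            have t := hσ2 i
            have t1 := hσ2 1
            generalize (∏ m ∈ Finset.range (n - 2), S (h (1 + m)) (h (1 + m + 1))) = τ at *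
            rw [hq'] at t ⊢
            linear_combination (-S (h i) (h 1)) * t
  refine ⟨(insert 0 (Finset.Ioo (n - k) n)).image h, ?_, h (n - 1), ?_⟩
  · rw [Finset.card_image_of_injOn]
    · rw [Finset.card_insert_of_notMem (by simp), Nat.card_Ioo]; omega
    · apply hinj.mono
      intro i hi
      simp only [Finset.coe_insert, Finset.coe_Ioo, Set.mem_insert_iff, Set.mem_Ioo] at hi
      simp only [Finset.coe_range, Set.mem_Iio]
      omega
  · intro x hx hsd
    simp only [Finset.mem_image, Finset.mem_insert, Finset.mem_Ioo] at hx
    obtain ⟨i, hi, rfl⟩ := hx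
    obtain ⟨e, e', w1, w2, hne⟩ := hasSSSD_iff.1 hsd
    obtain ⟨α, β, f1, f2⟩ := main _ _ _ _ w1
    obtain ⟨α', β', g1, g2⟩ := main _ _ _ _ w2
    rw [hph _ (by omega), hph _ (by omega)] at f1 g1
    have hnn : n - 1 + 1 = n := by omega
    have hpos0 : 0 < n * (n - 1) := Nat.mul_pos (by omega) (by omega)
    rcases Nat.lt_trichotomy α α' with hlt | heq | hgt
    · exact arith_lower (N := n - 1) (j := n - k) (i := i)
        (p := n * (n - 1) + (n - k) * (n - 1) - 1) (by omega)
        (by omega) (by rw [hnn]; omega) (by rw [hnn]; exact f1) (by rw [hnn]; exact g1) hlt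
    · subst heq
      have : (n - 1) * β = (n - 1) * β' := by omega
      have hb : β = β' := Nat.eq_of_mul_eq_mul_left (by omega) this
      subst hb
      exact hne (f2.trans g2.symm)
    · exact arith_lower (N := n - 1) (j := n - k) (i := i)
        (p := n * (n - 1) + (n - k) * (n - 1) - 1) (by omega)
        (by omega) (by rw [hnn]; omega) (by rw [hnn]; exact g1) (by rw [hnn]; exact f1) hgt

lemma set_up (hP : Primitive (Underlying S)) (X : Finset (Fin n)) {p p' : ℕ}
    (h : ∀ v, ∃ x ∈ X, HasSSSD S x v p) (hp : p ≤ p') : ∀ v, ∃ x ∈ X, HasSSSD S x v p' := by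
  induction p', hp using Nat.le_induction with
  | base => exact h
  | succ p' _ ih =>
    intro v
    obtain ⟨u, hu⟩ := prim_pred hP v
    obtain ⟨x, hx, hs⟩ := ih u
    exact ⟨x, hx, SSSD.post hs (SW.single hu)⟩

lemma upperBase_le {k B : ℕ}
    (h : ∀ X : Finset (Fin n), X.card = k → ∀ v, ∃ x ∈ X, HasSSSD S x v B) :
    upperBase S k ≤ B := by
  apply csSup_le'
  rintro e ⟨X, hX, rfl⟩
  exact Nat.sInf_le (h X hX)

/-- Full dichotomy. -/
lemma dichotomy (hn : 6 ≤ n) (k : ℕ) (hk1 : 1 ≤ k) (hkn : k ≤ n) (hS : SignPattern S)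
    (hP : Primitive (Underlying S)) (hN : NonPowerful S) :
    upperBase S k ≤ n * (n - 1) + (n - k) * (n - 1) - 3 ∨
    (n * (n - 1) + (n - k) * (n - 1) ≤ upperBase S k ∧
      upperBase S k ≤ n * (n - 1) + (n - k) * (n - 1) + 1) := by
  have hbig : 6 * 5 ≤ n * (n - 1) := Nat.mul_le_mul hn (by omega)
  by_cases hQ : QQ S (n * (n - 1) - 4)
  · left
    apply upperBase_le
    intro X hX v
    have := X_QQ hn hP X (by omega) hQ v
    rw [hX] at this
    convert this using 5
    omega
  right
  obtain ⟨V1, V2, η, γ, h1, h2, hne⟩ : ∃ V1 V2 η γ, Cyc S V1 n η ∧ Cyc S V2 (n - 1) γ ∧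
      η ^ (n - 1) ≠ γ ^ n := by
    obtain ⟨V1, p, ε, V2, q, δ, h1, h2, hne⟩ := exists_dist (by omega) hS hP hN
    rcases dist_QQ hn hP h1 h2 hne with h | ⟨rfl, rfl⟩ | ⟨rfl, rfl⟩
    · exact absurd h hQ
    · exact ⟨_, _, _, _, h1, h2, hne⟩
    · exact ⟨_, _, _, _, h2, h1, hne.symm⟩
  have hup : ∀ X : Finset (Fin n), X.card = k → ∀ v, ∃ x ∈ X,
      HasSSSD S x v (n * (n - 1) + (n - k) * (n - 1) + 1) := by
    intro X hX v
    have := X_HC hn hP X (by omega) h1 h2 hne v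
    rw [hX] at this
    rw [show n * (n - 1) + (n - k) * (n - 1) + 1 = (n - k) * (n - 1) + 1 + n * (n - 1) by omega]
    exact this
  refine ⟨?_, upperBase_le hup⟩
  have hcl := closed_ind (S := S)
    (fun l ε => (l = 0 ∧ ε = 1) ∨ (l = n - 1 ∧ ε = γ) ∨ n ≤ l) (by simp)
    (by
      rintro l ε l' ε' (⟨rfl, rfl⟩ | ⟨rfl, rfl⟩ | h) (⟨rfl, rfl⟩ | ⟨rfl, rfl⟩ | h')
      · simp
      · simp
      · right; right; omega
      · simp
      · right; right; omega
      · right; right; omega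
      · right; right; omega
      · right; right; omega
      · right; right; omega)
    (by
      intro V p ε hC
      have := no_short hn hS hP hQ h1 h2 hne hC
      rcases Nat.lt_or_ge p n with hlt | hge
      · right; left
        obtain rfl : p = n - 1 := by omega
        refine ⟨rfl, ?_⟩
        by_contra hc
        exact hQ (same_QQ hn hP hC h2 hc)
      · right; right; exact hge)
  obtain ⟨h, ha, hp, hsurj, harc⟩ := structure_of_min hn (by
    intro l u ε hw hl
    have := hcl l u ε hw
    omega) h1
  obtain ⟨X, hX, v, hv⟩ := lower hn hS (γ := γ) (by
    intro u ε hw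
    rcases hcl _ _ _ hw with h | h | h
    · omega
    · exact h.2
    · omega) h ha hp hsurj harc k hk1 hkn
  have hX2 : n * (n - 1) + (n - k) * (n - 1) ≤ setBase S X := by
    have hmem := Nat.sInf_mem (s := {p | ∀ v, ∃ x ∈ X, HasSSSD S x v p}) ⟨_, hup X hX⟩
    by_contra hlt
    obtain ⟨x, hx, hs⟩ := set_up hP X hmem
      (show setBase S X ≤ n * (n - 1) + (n - k) * (n - 1) - 1 by omega) v
    exact hv x hx hs
  refine hX2.trans (le_csSup ⟨n * (n - 1) + (n - k) * (n - 1) + 1, ?_⟩ ⟨X, hX, rfl⟩)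
  rintro e ⟨Y, hY, rfl⟩
  exact Nat.sInf_le (hup Y hY)

end Helpers

/-- Theorem 3.4 (parts (1) and (4)): for `n ≥ 6` and `1 ≤ k ≤ n`, every primitive
non-powerful signed digraph of order `n` satisfies `L(S,k) ≤ (2n-k)(n-1) + 1`,
and no value `t` with `(2n-k)(n-1) - 3 < t < (2n-k)(n-1)` is attained as `L(S,k)`. -/
theorem upperBase_bound_and_gap {n : ℕ} (hn : 6 ≤ n) (k : ℕ) (hk1 : 1 ≤ k) (hkn : k ≤ n) :
    (∀ S : Fin n → Fin n → ℤ, SignPattern S → Primitive (Underlying S) →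
      NonPowerful S → upperBase S k ≤ (2 * n - k) * (n - 1) + 1) ∧
    (∀ t : ℕ, (2 * n - k) * (n - 1) - 3 < t → t < (2 * n - k) * (n - 1) →
      ∀ S : Fin n → Fin n → ℤ, SignPattern S → Primitive (Underlying S) →
        NonPowerful S → upperBase S k ≠ t) := by
  have hM : (2 * n - k) * (n - 1) = n * (n - 1) + (n - k) * (n - 1) := by
    rw [← Nat.add_mul]; congr 1; omega
  rw [hM]
  have hbig : 6 * 5 ≤ n * (n - 1) := Nat.mul_le_mul hn (by omega)
  constructor
  · intro S hS hP hN
    rcases dichotomy hn k hk1 hkn hS hP hN with h | h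
    · omega
    · exact h.2
  · intro t ht1 ht2 S hS hP hN he
    rcases dichotomy hn k hk1 hkn hS hP hN with h | h
    · omega
    · omega
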